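/- arXiv:1712.02460 — 3 statements merged into one kernel-verified Lean document; each statement's English description precedes it below -/
import Mathlib

section
/- Let L be a Latin square of order n ≥ 2 in which the minimum deficit of a partial transversal is d. Then the minimum size of a cover of L is n + ⌈d/2⌉, and every partial transversal of deficit d is contained in a minimum cover of L (a cover of size n + ⌈d/2⌉). -/
/-!
Write a cover as `C` with `|C| = n + a`. Choosing one representative of every row leaves `a`
entries of `C` unchosen, and likewise for columns and symbols; the entries chosen all three times
form a partial transversal of size at least `n - 2a` (`exists_pt_of_cover`). Hence `d ≤ 2a`,
which is the lower bound.

Conversely, a partial transversal of deficit `d` misses `d` rows, `d` columns and `d` symbols. Any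
two lines of different types meet in an entry, so missing lines can be covered two at a time:
three entries deal with two rows, two columns and two symbols, and two entries deal with one of
each. This uses at most `d + ⌈d/2⌉` further entries (`exists_entries_covering`). Should the added
entries coincide or otherwise be wasted, the cover would be smaller than the lower bound allows, so
its size is exactly `n + ⌈d/2⌉`.
-/

/-- The set of entries `(i, j, L i j)` of a square array `L`. -/
def lsEntries {ι : Type} [Fintype ι] [DecidableEq ι] (L : ι → ι → ι) :
    Finset (ι × ι × ι) :=
  Finset.univ.image fun p : ι × ι => (p.1, p.2, L p.1 p.2)

/-- `L` is a Latin square: every row and every column is a bijection. -/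
def IsLatin {ι : Type} (L : ι → ι → ι) : Prop :=
  (∀ i, Function.Bijective fun j => L i j) ∧ (∀ j, Function.Bijective fun i => L i j)

/-- A cover: a set of entries representing every row, column and symbol. -/
def IsLSCover {ι : Type} [Fintype ι] [DecidableEq ι] (L : ι → ι → ι)
    (C : Finset (ι × ι × ι)) : Prop :=
  C ⊆ lsEntries L ∧ (∀ i : ι, ∃ e ∈ C, e.1 = i) ∧ (∀ j : ι, ∃ e ∈ C, e.2.1 = j) ∧
    (∀ s : ι, ∃ e ∈ C, e.2.2 = s)

/-- A minimal cover: no entry can be removed keeping it a cover. -/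
def IsMinimalLSCover {ι : Type} [Fintype ι] [DecidableEq ι] (L : ι → ι → ι)
    (C : Finset (ι × ι × ι)) : Prop :=
  IsLSCover L C ∧ ∀ e ∈ C, ¬ IsLSCover L (C.erase e)

/-- A partial transversal: a set of entries representing every line at most once. -/
def IsPT {ι : Type} [Fintype ι] [DecidableEq ι] (L : ι → ι → ι)
    (T : Finset (ι × ι × ι)) : Prop :=
  T ⊆ lsEntries L ∧
    ∀ e ∈ T, ∀ f ∈ T, e ≠ f → e.1 ≠ f.1 ∧ e.2.1 ≠ f.2.1 ∧ e.2.2 ≠ f.2.2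

/-- A maximal partial transversal: not contained in any larger partial transversal. -/
def IsMaximalPT {ι : Type} [Fintype ι] [DecidableEq ι] (L : ι → ι → ι)
    (T : Finset (ι × ι × ι)) : Prop :=
  IsPT L T ∧ ∀ e ∈ lsEntries L, e ∉ T → ¬ IsPT L (insert e T)

/-- A system of representatives in `C` for the fibres of a map `f` whose restriction to `C` is onto. -/
lemma exists_representatives {α : Type} [DecidableEq α] {n : ℕ} (f : α → Fin n) (C : Finset α)
    (h : ∀ i, ∃ e ∈ C, f e = i) :
    ∃ R ⊆ C, R.card = n ∧ ∀ x ∈ R, ∀ y ∈ R, f x = f y → x = y := by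
  choose g hg hfg using h
  refine ⟨Finset.univ.image g, ?_, ?_, ?_⟩
  · intro x hx
    obtain ⟨i, -, rfl⟩ := Finset.mem_image.1 hx
    exact hg i
  · rw [Finset.card_image_of_injective]
    · simp
    · intro i j hij
      rw [← hfg i, ← hfg j, hij]
  · intro x hx y hy hxy
    obtain ⟨i, -, rfl⟩ := Finset.mem_image.1 hx
    obtain ⟨j, -, rfl⟩ := Finset.mem_image.1 hy
    rw [hfg, hfg] at hxy
    rw [hxy]

/-- A cover of size `n + a` contains a partial transversal of size at least `n - 2a`. -/
lemma exists_pt_of_cover {n : ℕ} (L : Fin n → Fin n → Fin n)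
    (C : Finset (Fin n × Fin n × Fin n)) (hC : IsLSCover L C) :
    ∃ T ⊆ C, IsPT L T ∧ 3 * n ≤ T.card + 2 * C.card := by
  obtain ⟨hsub, h1, h2, h3⟩ := hC
  obtain ⟨R, hRC, hR, hRi⟩ := exists_representatives (fun e => e.1) C h1
  obtain ⟨K, hKC, hK, hKi⟩ := exists_representatives (fun e => e.2.1) C h2
  obtain ⟨S, hSC, hS, hSi⟩ := exists_representatives (fun e => e.2.2) C h3
  refine ⟨R ∩ K ∩ S, fun x hx => ?_, ⟨fun x hx => ?_, ?_⟩, ?_⟩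
  · simp only [Finset.mem_inter] at hx
    exact hSC hx.2
  · simp only [Finset.mem_inter] at hx
    exact hsub (hSC hx.2)
  · intro e he f hf hne
    simp only [Finset.mem_inter] at he hf
    exact ⟨fun h => hne (hRi e he.1.1 f hf.1.1 h), fun h => hne (hKi e he.1.2 f hf.1.2 h),
      fun h => hne (hSi e he.2 f hf.2 h)⟩
  · have a1 := Finset.card_union_add_card_inter R K
    have a2 := Finset.card_union_add_card_inter (R ∩ K) S
    have a3 := Finset.card_le_card (Finset.union_subset hRC hKC)
    have a4 := Finset.card_le_card
      (Finset.union_subset (Finset.inter_subset_left.trans hRC : R ∩ K ⊆ C) hSC)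
    omega

/-- A set of `d` rows, `d` columns and `d` symbols is covered by at most `d + ⌈d/2⌉` entries. -/
lemma exists_entries_covering {n : ℕ} (L : Fin n → Fin n → Fin n) (hL : IsLatin L) :
    ∀ (d : ℕ) (A B S : Finset (Fin n)), A.card = d → B.card = d → S.card = d →
      ∃ D ⊆ lsEntries L, D.card ≤ d + (d + 1) / 2 ∧ (∀ i ∈ A, ∃ e ∈ D, e.1 = i) ∧
        (∀ j ∈ B, ∃ e ∈ D, e.2.1 = j) ∧ (∀ s ∈ S, ∃ e ∈ D, e.2.2 = s)
  | 0, A, B, S, hA, hB, hS => by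
    rw [Finset.card_eq_zero] at hA hB hS
    subst hA hB hS
    exact ⟨∅, by simp⟩
  | 1, A, B, S, hA, hB, hS => by
    obtain ⟨a, rfl⟩ := Finset.card_eq_one.1 hA
    obtain ⟨b, rfl⟩ := Finset.card_eq_one.1 hB
    obtain ⟨s, rfl⟩ := Finset.card_eq_one.1 hS
    obtain ⟨j, hj⟩ := (hL.1 a).2 s
    refine ⟨{(a, b, L a b), (a, j, L a j)}, ?_, Finset.card_le_two, ?_, ?_, ?_⟩
    · intro x hx
      simp only [Finset.mem_insert, Finset.mem_singleton] at hx
      rcases hx with rfl | rfl <;> simp [lsEntries]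
    · simp
    · simp
    · simp only [Finset.mem_singleton, forall_eq]
      exact ⟨_, Finset.mem_insert_of_mem (Finset.mem_singleton_self _), hj⟩
  | d + 2, A, B, S, hA, hB, hS => by
    obtain ⟨a₁, A₁, ha₁, rfl, hA₁⟩ := Finset.card_eq_succ.1 hA
    obtain ⟨a₂, A₂, ha₂, rfl, hA₂⟩ := Finset.card_eq_succ.1 hA₁
    obtain ⟨b₁, B₁, hb₁, rfl, hB₁⟩ := Finset.card_eq_succ.1 hB
    obtain ⟨b₂, B₂, hb₂, rfl, hB₂⟩ := Finset.card_eq_succ.1 hB₁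
    obtain ⟨s₁, S₁, hs₁, rfl, hS₁⟩ := Finset.card_eq_succ.1 hS
    obtain ⟨s₂, S₂, hs₂, rfl, hS₂⟩ := Finset.card_eq_succ.1 hS₁
    obtain ⟨D, hD, hc, h1, h2, h3⟩ := exists_entries_covering L hL d A₂ B₂ S₂ hA₂ hB₂ hS₂
    obtain ⟨j, hj⟩ := (hL.1 a₂).2 s₁
    obtain ⟨i, hi⟩ := (hL.2 b₂).2 s₂
    refine ⟨{(a₁, b₁, L a₁ b₁), (a₂, j, L a₂ j), (i, b₂, L i b₂)} ∪ D, ?_, ?_, ?_, ?_, ?_⟩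
    · refine Finset.union_subset (fun x hx => ?_) hD
      simp only [Finset.mem_insert, Finset.mem_singleton] at hx
      rcases hx with rfl | rfl | rfl <;> simp [lsEntries]
    · have := Finset.card_union_le
        ({(a₁, b₁, L a₁ b₁), (a₂, j, L a₂ j), (i, b₂, L i b₂)} : Finset _) D
      have h3 := Finset.card_le_three (a := (a₁, b₁, L a₁ b₁)) (b := (a₂, j, L a₂ j))
        (c := (i, b₂, L i b₂))
      omega
    · intro x hx
      simp only [Finset.mem_insert] at hx
      rcases hx with rfl | rfl | hx
      · exact ⟨(x, b₁, L x b₁), by simp, rfl⟩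
      · exact ⟨(x, j, L x j), by simp, rfl⟩
      · obtain ⟨e, he, h⟩ := h1 x hx
        exact ⟨e, Finset.mem_union_right _ he, h⟩
    · intro x hx
      simp only [Finset.mem_insert] at hx
      rcases hx with rfl | rfl | hx
      · exact ⟨(a₁, x, L a₁ x), by simp, rfl⟩
      · exact ⟨(i, x, L i x), by simp, rfl⟩
      · obtain ⟨e, he, h⟩ := h2 x hx
        exact ⟨e, Finset.mem_union_right _ he, h⟩
    · intro x hx
      simp only [Finset.mem_insert] at hx
      rcases hx with rfl | rfl | hx
      · exact ⟨(a₂, j, L a₂ j), by simp, hj⟩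
      · exact ⟨(i, b₂, L i b₂), by simp, hi⟩
      · obtain ⟨e, he, h⟩ := h3 x hx
        exact ⟨e, Finset.mem_union_right _ he, h⟩

/-- If `f` is injective on `T`, exactly `n - |T|` values are missed by `f` on `T`. -/
lemma card_missed {α : Type} {n d : ℕ} (f : α → Fin n) (T : Finset α)
    (hT : T.card + d = n) (hf : Set.InjOn f T) : (Finset.univ \ T.image f).card = d := by
  rw [Finset.card_sdiff_of_subset (Finset.subset_univ _), Finset.card_image_of_injOn hf,
    Finset.card_univ, Fintype.card_fin]
  omega

lemma exists_cover_of_pt {n : ℕ} (L : Fin n → Fin n → Fin n) (hL : IsLatin L) (d : ℕ)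
    (T : Finset (Fin n × Fin n × Fin n)) (hT : IsPT L T) (hc : T.card + d = n) :
    ∃ C, IsLSCover L C ∧ C.card ≤ n + (d + 1) / 2 ∧ T ⊆ C := by
  obtain ⟨hTE, hTd⟩ := hT
  obtain ⟨D, hD, hDc, h1, h2, h3⟩ := exists_entries_covering L hL d
    (Finset.univ \ T.image fun e => e.1) (Finset.univ \ T.image fun e => e.2.1)
    (Finset.univ \ T.image fun e => e.2.2)
    (card_missed (fun e => e.1) T hc fun e he f hf h =>
      by_contra fun hne => (hTd e he f hf hne).1 h)
    (card_missed (fun e => e.2.1) T hc fun e he f hf h =>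
      by_contra fun hne => (hTd e he f hf hne).2.1 h)
    (card_missed (fun e => e.2.2) T hc fun e he f hf h =>
      by_contra fun hne => (hTd e he f hf hne).2.2 h)
  have key : ∀ f : Fin n × Fin n × Fin n → Fin n,
      (∀ i ∈ Finset.univ \ T.image f, ∃ e ∈ D, f e = i) → ∀ i, ∃ e ∈ T ∪ D, f e = i := by
    intro f hf i
    by_cases hi : i ∈ T.image f
    · obtain ⟨e, he, h⟩ := Finset.mem_image.1 hi
      exact ⟨e, Finset.mem_union_left _ he, h⟩
    · obtain ⟨e, he, h⟩ := hf i (Finset.mem_sdiff.2 ⟨Finset.mem_univ _, hi⟩)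
      exact ⟨e, Finset.mem_union_right _ he, h⟩
  refine ⟨T ∪ D, ⟨Finset.union_subset hTE hD, key _ h1, key _ h2, key _ h3⟩, ?_,
    Finset.subset_union_left⟩
  have := Finset.card_union_le T D
  omega

/-- If the minimum deficit of a partial transversal of a Latin square of order `n ≥ 2`
is `d`, then the minimum size of a cover is `n + ⌈d/2⌉`, and every partial transversal
of deficit `d` is contained in a cover of that (minimum) size. -/
theorem stmt4 {n : ℕ} (hn : 2 ≤ n) (L : Fin n → Fin n → Fin n) (hL : IsLatin L)
    (d : ℕ)
    (hd : IsLeast {d' : ℕ | ∃ T : Finset (Fin n × Fin n × Fin n),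
      IsPT L T ∧ T.card + d' = n} d) :
    IsLeast {c : ℕ | ∃ C : Finset (Fin n × Fin n × Fin n),
        IsLSCover L C ∧ C.card = c} (n + (d + 1) / 2) ∧
      ∀ T : Finset (Fin n × Fin n × Fin n), IsPT L T → T.card + d = n →
        ∃ C : Finset (Fin n × Fin n × Fin n),
          IsLSCover L C ∧ C.card = n + (d + 1) / 2 ∧ T ⊆ C := by
  have lower : ∀ C, IsLSCover L C → n + (d + 1) / 2 ≤ C.card := by
    intro C hC
    obtain ⟨T, -, hT, hcard⟩ := exists_pt_of_cover L C hC
    have hTn : T.card ≤ n := by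
      have := Finset.card_le_card_of_injOn (s := T) (t := (Finset.univ : Finset (Fin n)))
        (fun e => e.1) (fun _ _ => Finset.mem_univ _)
        (fun e he f hf h => by_contra fun hne => (hT.2 e he f hf hne).1 h)
      simpa using this
    have := hd.2 ⟨T, hT, Nat.add_sub_cancel' hTn⟩
    omega
  have upper : ∀ T : Finset (Fin n × Fin n × Fin n), IsPT L T → T.card + d = n →
      ∃ C : Finset (Fin n × Fin n × Fin n),
        IsLSCover L C ∧ C.card = n + (d + 1) / 2 ∧ T ⊆ C := by
    intro T hT hc
    obtain ⟨C, hC, hCc, hTC⟩ := exists_cover_of_pt L hL d T hT hc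
    exact ⟨C, hC, le_antisymm hCc (lower C hC), hTC⟩
  refine ⟨⟨?_, ?_⟩, upper⟩
  · obtain ⟨T, hT, hc⟩ := hd.1
    obtain ⟨C, hC, hCc, -⟩ := upper T hT hc
    exact ⟨C, hC, hCc⟩
  · rintro c ⟨C, hC, rfl⟩
    exact lower C hC
end

section
/- Let T be a maximal partial transversal of deficit 1 in a Latin square L of order n ≥ 3. Then T is contained in exactly 3(n−1) distinct covers of L of size n + 1, and each of these covers is minimal. -/
/-- An injective image of a set with one element fewer than `Fin n` misses exactly one value. -/
lemma exists_unique_missed {α : Type} [DecidableEq α] {n : ℕ} (T : Finset α) (p : α → Fin n)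
    (hp : ∀ e ∈ T, ∀ f ∈ T, e ≠ f → p e ≠ p f) (hc : T.card + 1 = n) :
    ∃ r, (∀ e ∈ T, p e ≠ r) ∧ ∀ i, i ≠ r → ∃ e ∈ T, p e = i := by
  have h1 : (T.image p).card = T.card :=
    Finset.card_image_of_injOn fun e he f hf h => by
      by_contra hne
      exact hp e he f hf hne h
  have h2 : ((T.image p)ᶜ).card = 1 := by
    rw [Finset.card_compl, h1, Fintype.card_fin]; omega
  obtain ⟨r, hr⟩ := Finset.card_eq_one.1 h2
  have key : ∀ i, i ∈ (T.image p)ᶜ ↔ i = r := fun i => by rw [hr, Finset.mem_singleton]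
  refine ⟨r, fun e he h => ?_, fun i hi => ?_⟩
  · have := (key r).2 rfl
    rw [Finset.mem_compl] at this
    exact this (Finset.mem_image.2 ⟨e, he, h⟩)
  · have h3 := mt (key i).1 hi
    rw [Finset.mem_compl, not_not] at h3
    simpa using h3

/-- The counting core: `R`, `K`, `S` are three lines disjoint from `T`, pairwise meeting in the
single points `A`, `B`, `D` and with no common point. The two-point extensions of `T` meeting all
three lines split according to which of `A`, `D`, `B` they contain; leaving out `D`, `B`, `A`
respectively from the choices for the second point makes the three families disjoint. -/
lemma count_pair_extensions {α : Type} [DecidableEq α] (E T R K S : Finset α) (m : ℕ) (A B D : α)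
    (hTE : T ⊆ E) (hRE : R ⊆ E) (hKE : K ⊆ E) (hSE : S ⊆ E)
    (hR : R.card = m + 1) (hK : K.card = m + 1) (hS : S.card = m + 1)
    (hAR : A ∈ R) (hAK : A ∈ K) (hA : ∀ x, x ∈ R → x ∈ K → x = A)
    (hBR : B ∈ R) (hBS : B ∈ S) (hB : ∀ x, x ∈ R → x ∈ S → x = B)
    (hDK : D ∈ K) (hDS : D ∈ S) (hD : ∀ x, x ∈ K → x ∈ S → x = D)
    (hAS : A ∉ S) (hTR : ∀ x ∈ T, x ∉ R) (hTK : ∀ x ∈ T, x ∉ K) (hTS : ∀ x ∈ T, x ∉ S) :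
    {C : Finset α | C ⊆ E ∧ C.card = T.card + 2 ∧ T ⊆ C ∧ (∃ e ∈ C, e ∈ R) ∧
      (∃ e ∈ C, e ∈ K) ∧ (∃ e ∈ C, e ∈ S)}.ncard = 3 * m := by
  have hBK : B ∉ K := fun h => hAS (hA B hBR h ▸ hBS)
  have hDR : D ∉ R := fun h => hAS (hA D h hDK ▸ hDS)
  have hAT : A ∉ T := fun h => hTR A h hAR
  have hBT : B ∉ T := fun h => hTR B h hBR
  have hDT : D ∉ T := fun h => hTK D h hDK
  have hAB : A ≠ B := fun h => hAS (h ▸ hBS)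
  have hAD : A ≠ D := fun h => hAS (h ▸ hDS)
  have hBD : B ≠ D := fun h => hBK (h ▸ hDK)
  let F : α → Finset α → Finset (Finset α) := fun x X => X.image fun f => insert x (insert f T)
  have hF : ∀ x X C, C ∈ F x X ↔ ∃ f ∈ X, insert x (insert f T) = C := fun x X C => by
    simp [F]
  have cardF : ∀ (x : α) (X : Finset α) (y : α), X.card = m + 1 → y ∈ X → x ∉ X →
      (∀ t ∈ T, t ∉ X) → (F x (X.erase y)).card = m := by
    intro x X y hX hy hx ht
    rw [Finset.card_image_of_injOn, Finset.card_erase_of_mem hy, hX]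
    · rfl
    intro f hf g hg h
    have hf' : f ∈ X := Finset.mem_of_mem_erase hf
    have : f ∈ insert x (insert g T) := by
      rw [← show insert x (insert f T) = insert x (insert g T) from h]; simp
    simp only [Finset.mem_insert] at this
    rcases this with rfl | rfl | h
    · exact absurd hf' hx
    · rfl
    · exact absurd hf' (ht _ h)
  have c1 := cardF A S D hS hDS hAS hTS
  have c2 := cardF D R B hR hBR hDR hTR
  have c3 := cardF B K A hK hAK hBK hTK
  have inF : ∀ x X C, C ∈ F x X → x ∈ C := by
    intro x X C h
    obtain ⟨f, -, rfl⟩ := (hF _ _ _).1 h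
    simp
  have notF : ∀ (x : α) (X : Finset α) (y : α) (C : Finset α), x ≠ y → y ∉ T → C ∈ F x (X.erase y) → y ∉ C := by
    intro x X y C hxy hy h
    obtain ⟨f, hf, rfl⟩ := (hF _ _ _).1 h
    have := Finset.ne_of_mem_erase hf
    simp only [Finset.mem_insert]
    rintro (h | h | h)
    · exact hxy h.symm
    · exact this h.symm
    · exact hy h
  have d12 : Disjoint (F A (S.erase D)) (F D (R.erase B)) :=
    Finset.disjoint_left.2 fun C h h' => notF _ _ _ _ hAD hDT h (inF _ _ _ h')
  have d23 : Disjoint (F D (R.erase B)) (F B (K.erase A)) :=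
    Finset.disjoint_left.2 fun C h h' => notF _ _ _ _ hBD.symm hBT h (inF _ _ _ h')
  have d13 : Disjoint (F A (S.erase D)) (F B (K.erase A)) :=
    Finset.disjoint_left.2 fun C h h' => notF _ _ _ _ hAB.symm hAT h' (inF _ _ _ h)
  have key : {C : Finset α | C ⊆ E ∧ C.card = T.card + 2 ∧ T ⊆ C ∧ (∃ e ∈ C, e ∈ R) ∧
      (∃ e ∈ C, e ∈ K) ∧ (∃ e ∈ C, e ∈ S)} =
      ((F A (S.erase D) ∪ F D (R.erase B) ∪ F B (K.erase A) : Finset (Finset α)) :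
        Set (Finset α)) := by
    ext C
    simp only [Set.mem_ofPred_eq, Finset.coe_union, Set.mem_union, Finset.mem_coe, hF,
      Finset.mem_erase]
    constructor
    · rintro ⟨-, hc, hTC, ⟨x, hxC, hx⟩, ⟨y, hyC, hy⟩, ⟨z, hzC, hz⟩⟩
      have hx' : x ∈ C \ T := Finset.mem_sdiff.2 ⟨hxC, fun h => hTR x h hx⟩
      have hy' : y ∈ C \ T := Finset.mem_sdiff.2 ⟨hyC, fun h => hTK y h hy⟩
      have hz' : z ∈ C \ T := Finset.mem_sdiff.2 ⟨hzC, fun h => hTS z h hz⟩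
      have h2 : (C \ T).card = 2 := by rw [Finset.card_sdiff_of_subset hTC]; omega
      have build : ∀ u v, u ∈ C \ T → v ∈ C \ T → u ≠ v → insert u (insert v T) = C := by
        intro u v hu hv huv
        have : ({u, v} : Finset α) = C \ T :=
          Finset.eq_of_subset_of_card_le (by simp [Finset.insert_subset_iff, hu, hv])
            (by rw [h2, Finset.card_pair huv])
        rw [← Finset.sdiff_union_of_subset hTC, ← this]
        ext; simp
      -- among three points of a two-point set two coincide
      have h3 : x = y ∨ x = z ∨ y = z := by
        by_contra! hne
        have : ({x, y, z} : Finset α).card ≤ (C \ T).card :=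
          Finset.card_le_card (by simp [Finset.insert_subset_iff, hx', hy', hz'])
        rw [h2, Finset.card_eq_three.2 ⟨x, y, z, hne.1, hne.2.1, hne.2.2, rfl⟩] at this
        omega
      rcases h3 with rfl | rfl | rfl
      · obtain rfl := hA x hx hy
        have hxz : x ≠ z := fun h => hAS (h ▸ hz)
        by_cases hzD : z = D
        · subst hzD
          exact .inl (.inr ⟨x, ⟨hAB, hAR⟩, build _ _ hz' hx' hxz.symm⟩)
        · exact .inl (.inl ⟨z, ⟨hzD, hz⟩, build _ _ hx' hz' hxz⟩)
      · obtain rfl := hB x hx hz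
        have hxy : x ≠ y := fun h => hBK (h ▸ hy)
        by_cases hyA : y = A
        · subst hyA
          exact .inl (.inl ⟨x, ⟨hBD, hBS⟩, build _ _ hy' hx' hxy.symm⟩)
        · exact .inr ⟨y, ⟨hyA, hy⟩, build _ _ hx' hy' hxy⟩
      · obtain rfl := hD y hy hz
        have hxy : y ≠ x := fun h => hDR (h ▸ hx)
        by_cases hxB : x = B
        · subst hxB
          exact .inr ⟨y, ⟨hAD.symm, hDK⟩, build _ _ hx' hy' hxy.symm⟩
        · exact .inl (.inr ⟨x, ⟨hxB, hx⟩, build _ _ hy' hx' hxy⟩)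
    · have card2 : ∀ u v, u ≠ v → u ∉ T → v ∉ T →
          (insert u (insert v T)).card = T.card + 2 := by
        intro u v huv hu hv
        rw [Finset.card_insert_of_notMem (by simp [huv, hu]), Finset.card_insert_of_notMem hv]
      have sub : ∀ u v, u ∈ E → v ∈ E → insert u (insert v T) ⊆ E := by
        intro u v hu hv
        simp [Finset.insert_subset_iff, hu, hv, hTE]
      have sup : ∀ u v, T ⊆ insert u (insert v T) := fun u v =>
        (Finset.subset_insert _ _).trans (Finset.subset_insert _ _)
      have m1 : ∀ u v, u ∈ insert u (insert v T) := fun u v => by simp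
      have m2 : ∀ u v, v ∈ insert u (insert v T) := fun u v => by simp
      rintro ((⟨f, ⟨-, hf⟩, rfl⟩ | ⟨f, ⟨-, hf⟩, rfl⟩) | ⟨f, ⟨-, hf⟩, rfl⟩)
      · exact ⟨sub _ _ (hRE hAR) (hSE hf),
          card2 _ _ (fun h => hAS (h ▸ hf)) hAT (fun h => hTS _ h hf), sup _ _,
          ⟨_, m1 _ _, hAR⟩, ⟨_, m1 _ _, hAK⟩, ⟨_, m2 _ _, hf⟩⟩
      · exact ⟨sub _ _ (hKE hDK) (hRE hf),
          card2 _ _ (fun h => hDR (h ▸ hf)) hDT (fun h => hTR _ h hf), sup _ _,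
          ⟨_, m2 _ _, hf⟩, ⟨_, m1 _ _, hDK⟩, ⟨_, m1 _ _, hDS⟩⟩
      · exact ⟨sub _ _ (hRE hBR) (hKE hf),
          card2 _ _ (fun h => hBK (h ▸ hf)) hBT (fun h => hTK _ h hf), sup _ _,
          ⟨_, m1 _ _, hBR⟩, ⟨_, m2 _ _, hf⟩, ⟨_, m1 _ _, hBS⟩⟩
  rw [key, Set.ncard_coe_finset, Finset.card_union_of_disjoint
    (Finset.disjoint_union_left.2 ⟨d13, d23⟩), Finset.card_union_of_disjoint d12, c1, c2, c3]
  ring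

lemma mem_lsEntries_iff {ι : Type} [Fintype ι] [DecidableEq ι] (L : ι → ι → ι) (e : ι × ι × ι) :
    e ∈ lsEntries L ↔ L e.1 e.2.1 = e.2.2 := by
  obtain ⟨i, j, k⟩ := e
  simp [lsEntries]

lemma eq_of_row_col {ι : Type} [Fintype ι] [DecidableEq ι] {L : ι → ι → ι}
    {e f : ι × ι × ι} (he : e ∈ lsEntries L) (hf : f ∈ lsEntries L)
    (h1 : e.1 = f.1) (h2 : e.2.1 = f.2.1) : e = f := by
  rw [mem_lsEntries_iff] at he hf
  refine Prod.ext h1 (Prod.ext h2 ?_)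
  rw [← he, ← hf, h1, h2]

lemma eq_of_row_sym {ι : Type} [Fintype ι] [DecidableEq ι] {L : ι → ι → ι} (hL : IsLatin L)
    {e f : ι × ι × ι} (he : e ∈ lsEntries L) (hf : f ∈ lsEntries L)
    (h1 : e.1 = f.1) (h2 : e.2.2 = f.2.2) : e = f := by
  refine eq_of_row_col he hf h1 ((hL.1 e.1).1 ?_)
  rw [mem_lsEntries_iff] at he hf
  change L e.1 e.2.1 = L e.1 f.2.1
  rw [he, h1, hf, h2]

lemma eq_of_col_sym {ι : Type} [Fintype ι] [DecidableEq ι] {L : ι → ι → ι} (hL : IsLatin L)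
    {e f : ι × ι × ι} (he : e ∈ lsEntries L) (hf : f ∈ lsEntries L)
    (h1 : e.2.1 = f.2.1) (h2 : e.2.2 = f.2.2) : e = f := by
  refine eq_of_row_col he hf ((hL.2 e.2.1).1 ?_) h1
  rw [mem_lsEntries_iff] at he hf
  change L e.1 e.2.1 = L f.1 e.2.1
  rw [he, h1, hf, h2]

/-- A set of entries on which a coordinate `q` is a bijection onto `Fin n` has `n` elements. -/
lemma card_line {α : Type} [DecidableEq α] {n : ℕ} (X : Finset α) (q : α → Fin n)
    (hi : ∀ e ∈ X, ∀ f ∈ X, q e = q f → e = f) (hs : ∀ i, ∃ e ∈ X, q e = i) : X.card = n := by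
  have h1 : (X.image q).card = X.card :=
    Finset.card_image_of_injOn fun e he f hf h => hi e he f hf h
  have h2 : X.image q = Finset.univ := by
    ext i; simpa using hs i
  rw [← h1, h2, Finset.card_univ, Fintype.card_fin]

/-- Minimality of `C = T ∪ {x, y}`, where `T` avoids row `r`, column `c` and symbol `s`, and no
entry lies on all three of these lines. -/
lemma minimal_of_cover {n : ℕ} {L : Fin n → Fin n → Fin n} (hL : IsLatin L)
    {T C : Finset (Fin n × Fin n × Fin n)} (hT : IsPT L T) {r c s : Fin n}
    (hr : ∀ e ∈ T, e.1 ≠ r) (hc : ∀ e ∈ T, e.2.1 ≠ c) (hs : ∀ e ∈ T, e.2.2 ≠ s)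
    (hrcs : ∀ e ∈ lsEntries L, e.1 = r → e.2.1 = c → e.2.2 = s → False)
    (hC : IsLSCover L C) (hcard : C.card = T.card + 2) (hTC : T ⊆ C) :
    IsMinimalLSCover L C := by
  refine ⟨hC, fun t ht hcov => ?_⟩
  obtain ⟨-, h1, h2, h3⟩ := hcov
  have hsd : (C \ T).card = 2 := by rw [Finset.card_sdiff_of_subset hTC]; omega
  obtain ⟨x, y, hxy, hCxy⟩ := Finset.card_eq_two.1 hsd
  have hmem : ∀ e, e ∈ C → e ∈ T ∨ e = x ∨ e = y := by
    intro e he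
    by_cases heT : e ∈ T
    · exact .inl heT
    · right
      have : e ∈ C \ T := Finset.mem_sdiff.2 ⟨he, heT⟩
      rw [hCxy] at this
      simpa using this
  have hx : x ∈ C ∧ x ∉ T := Finset.mem_sdiff.1 (by rw [hCxy]; simp)
  have hy : y ∈ C ∧ y ∉ T := Finset.mem_sdiff.1 (by rw [hCxy]; simp)
  -- the missing lines are met by `x` or `y`, and by one that is not removed
  have r1 : (x ≠ t ∧ x.1 = r) ∨ (y ≠ t ∧ y.1 = r) := by
    obtain ⟨e, he, h⟩ := h1 r
    rw [Finset.mem_erase] at he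
    rcases hmem e he.2 with hh | rfl | rfl
    exacts [absurd h (hr e hh), .inl ⟨he.1, h⟩, .inr ⟨he.1, h⟩]
  have c1 : (x ≠ t ∧ x.2.1 = c) ∨ (y ≠ t ∧ y.2.1 = c) := by
    obtain ⟨e, he, h⟩ := h2 c
    rw [Finset.mem_erase] at he
    rcases hmem e he.2 with hh | rfl | rfl
    exacts [absurd h (hc e hh), .inl ⟨he.1, h⟩, .inr ⟨he.1, h⟩]
  have s1 : (x ≠ t ∧ x.2.2 = s) ∨ (y ≠ t ∧ y.2.2 = s) := by
    obtain ⟨e, he, h⟩ := h3 s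
    rw [Finset.mem_erase] at he
    rcases hmem e he.2 with hh | rfl | rfl
    exacts [absurd h (hs e hh), .inl ⟨he.1, h⟩, .inr ⟨he.1, h⟩]
  have hxE := hC.1 hx.1
  have hyE := hC.1 hy.1
  have nx := hrcs x hxE
  have ny := hrcs y hyE
  rcases hmem t ht with htT | rfl | rfl
  · have htE := hC.1 ht
    have r2 : x.1 = t.1 ∨ y.1 = t.1 := by
      obtain ⟨e, he, h⟩ := h1 t.1
      rw [Finset.mem_erase] at he
      rcases hmem e he.2 with hh | rfl | rfl
      exacts [absurd h (hT.2 e hh t htT he.1).1, .inl h, .inr h]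
    have c2 : x.2.1 = t.2.1 ∨ y.2.1 = t.2.1 := by
      obtain ⟨e, he, h⟩ := h2 t.2.1
      rw [Finset.mem_erase] at he
      rcases hmem e he.2 with hh | rfl | rfl
      exacts [absurd h (hT.2 e hh t htT he.1).2.1, .inl h, .inr h]
    have s2 : x.2.2 = t.2.2 ∨ y.2.2 = t.2.2 := by
      obtain ⟨e, he, h⟩ := h3 t.2.2
      rw [Finset.mem_erase] at he
      rcases hmem e he.2 with hh | rfl | rfl
      exacts [absurd h (hT.2 e hh t htT he.1).2.2, .inl h, .inr h]
    have xt : x ≠ t := fun h => hx.2 (h ▸ htT)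
    have yt : y ≠ t := fun h => hy.2 (h ▸ htT)
    -- one of `x`, `y` agrees with `t` in two of the three coordinates
    have x12 := fun h h' => xt (eq_of_row_col hxE htE h h')
    have x13 := fun h h' => xt (eq_of_row_sym hL hxE htE h h')
    have x23 := fun h h' => xt (eq_of_col_sym hL hxE htE h h')
    have y12 := fun h h' => yt (eq_of_row_col hyE htE h h')
    have y13 := fun h h' => yt (eq_of_row_sym hL hyE htE h h')
    have y23 := fun h h' => yt (eq_of_col_sym hL hyE htE h h')
    rcases r2 with r2 | r2 <;> rcases c2 with c2 | c2
    · exact x12 r2 c2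
    · exact s2.elim (x13 r2) (y23 c2)
    · exact s2.elim (x23 c2) (y13 r2)
    · exact y12 r2 c2
  · tauto
  · tauto

/-- A maximal partial transversal of deficit `1` in a Latin square of order `n ≥ 3`
belongs to exactly `3(n-1)` covers of size `n + 1`, each of which is minimal. -/
theorem stmt8 {n : ℕ} (hn : 3 ≤ n) (L : Fin n → Fin n → Fin n) (hL : IsLatin L)
    (T : Finset (Fin n × Fin n × Fin n)) (hT : IsMaximalPT L T)
    (hTcard : T.card + 1 = n) :
    {C : Finset (Fin n × Fin n × Fin n) |
        IsLSCover L C ∧ C.card = n + 1 ∧ T ⊆ C}.ncard = 3 * (n - 1) ∧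
      ∀ C : Finset (Fin n × Fin n × Fin n),
        IsLSCover L C → C.card = n + 1 → T ⊆ C → IsMinimalLSCover L C := by
  obtain ⟨hPT, hmax⟩ := hT
  obtain ⟨r, hr, hr'⟩ := exists_unique_missed T (fun e => e.1)
    (fun e he f hf h => (hPT.2 e he f hf h).1) hTcard
  obtain ⟨c, hc, hc'⟩ := exists_unique_missed T (fun e => e.2.1)
    (fun e he f hf h => (hPT.2 e he f hf h).2.1) hTcard
  obtain ⟨s, hs, hs'⟩ := exists_unique_missed T (fun e => e.2.2)
    (fun e he f hf h => (hPT.2 e he f hf h).2.2) hTcard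
  have hrcs : ∀ e ∈ lsEntries L, e.1 = r → e.2.1 = c → e.2.2 = s → False := by
    intro e he h1 h2 h3
    have heT : e ∉ T := fun h => hr e h h1
    refine hmax e he heT ⟨Finset.insert_subset he hPT.1, ?_⟩
    intro a ha b hb hab
    rw [Finset.mem_insert] at ha hb
    rcases ha with rfl | ha <;> rcases hb with rfl | hb
    · exact absurd rfl hab
    · exact ⟨h1 ▸ (hr b hb).symm, h2 ▸ (hc b hb).symm, h3 ▸ (hs b hb).symm⟩
    · exact ⟨h1 ▸ hr a ha, h2 ▸ hc a ha, h3 ▸ hs a ha⟩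
    · exact hPT.2 a ha b hb hab
  refine ⟨?_, fun C hC hcard hTC => minimal_of_cover hL hPT hr hc hs hrcs hC (by omega) hTC⟩
  have exRC : ∀ i j, ∃ e ∈ lsEntries L, e.1 = i ∧ e.2.1 = j := fun i j =>
    ⟨(i, j, L i j), (mem_lsEntries_iff _ _).2 rfl, rfl, rfl⟩
  have exRS : ∀ i k, ∃ e ∈ lsEntries L, e.1 = i ∧ e.2.2 = k := fun i k => by
    obtain ⟨j, hj⟩ := (hL.1 i).2 k
    exact ⟨(i, j, k), (mem_lsEntries_iff _ _).2 hj, rfl, rfl⟩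
  have exCS : ∀ j k, ∃ e ∈ lsEntries L, e.2.1 = j ∧ e.2.2 = k := fun j k => by
    obtain ⟨i, hi⟩ := (hL.2 j).2 k
    exact ⟨(i, j, k), (mem_lsEntries_iff _ _).2 hi, rfl, rfl⟩
  obtain ⟨A, hA, hA1, hA2⟩ := exRC r c
  obtain ⟨B, hB, hB1, hB2⟩ := exRS r s
  obtain ⟨D, hD, hD1, hD2⟩ := exCS c s
  let R := (lsEntries L).filter fun e => e.1 = r
  let K := (lsEntries L).filter fun e => e.2.1 = c
  let S := (lsEntries L).filter fun e => e.2.2 = s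
  have mR : ∀ e, e ∈ R ↔ e ∈ lsEntries L ∧ e.1 = r := fun e => Finset.mem_filter
  have mK : ∀ e, e ∈ K ↔ e ∈ lsEntries L ∧ e.2.1 = c := fun e => Finset.mem_filter
  have mS : ∀ e, e ∈ S ↔ e ∈ lsEntries L ∧ e.2.2 = s := fun e => Finset.mem_filter
  have hn1 : n = (n - 1) + 1 := by omega
  have cR : R.card = (n - 1) + 1 := by
    rw [← hn1]
    refine card_line R (fun e => e.2.1) (fun e he f hf h => ?_) (fun j => ?_)
    · rw [mR] at he hf
      exact eq_of_row_col he.1 hf.1 (he.2.trans hf.2.symm) h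
    · obtain ⟨e, he, h, h'⟩ := exRC r j
      exact ⟨e, (mR e).2 ⟨he, h⟩, h'⟩
  have cK : K.card = (n - 1) + 1 := by
    rw [← hn1]
    refine card_line K (fun e => e.1) (fun e he f hf h => ?_) (fun i => ?_)
    · rw [mK] at he hf
      exact eq_of_row_col he.1 hf.1 h (he.2.trans hf.2.symm)
    · obtain ⟨e, he, h, h'⟩ := exRC i c
      exact ⟨e, (mK e).2 ⟨he, h'⟩, h⟩
  have cS : S.card = (n - 1) + 1 := by
    rw [← hn1]
    refine card_line S (fun e => e.1) (fun e he f hf h => ?_) (fun i => ?_)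
    · rw [mS] at he hf
      exact eq_of_row_sym hL he.1 hf.1 h (he.2.trans hf.2.symm)
    · obtain ⟨e, he, h, h'⟩ := exRS i s
      exact ⟨e, (mS e).2 ⟨he, h'⟩, h⟩
  have main := count_pair_extensions (lsEntries L) T R K S (n - 1) A B D hPT.1
    (Finset.filter_subset _ _) (Finset.filter_subset _ _) (Finset.filter_subset _ _) cR cK cS
    ((mR A).2 ⟨hA, hA1⟩) ((mK A).2 ⟨hA, hA2⟩)
    (fun x h h' => by
      rw [mR] at h; rw [mK] at h'
      exact eq_of_row_col h.1 hA (h.2.trans hA1.symm) (h'.2.trans hA2.symm))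
    ((mR B).2 ⟨hB, hB1⟩) ((mS B).2 ⟨hB, hB2⟩)
    (fun x h h' => by
      rw [mR] at h; rw [mS] at h'
      exact eq_of_row_sym hL h.1 hB (h.2.trans hB1.symm) (h'.2.trans hB2.symm))
    ((mK D).2 ⟨hD, hD1⟩) ((mS D).2 ⟨hD, hD2⟩)
    (fun x h h' => by
      rw [mK] at h; rw [mS] at h'
      exact eq_of_col_sym hL h.1 hD (h.2.trans hD1.symm) (h'.2.trans hD2.symm))
    (fun h => hrcs A hA hA1 hA2 ((mS A).1 h).2)
    (fun x hx h => hr x hx ((mR x).1 h).2) (fun x hx h => hc x hx ((mK x).1 h).2)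
    (fun x hx h => hs x hx ((mS x).1 h).2)
  rw [← main]
  congr 1
  ext C
  simp only [Set.mem_ofPred_eq]
  constructor
  · rintro ⟨⟨hE, h1, h2, h3⟩, hcard, hTC⟩
    obtain ⟨e1, he1, g1⟩ := h1 r
    obtain ⟨e2, he2, g2⟩ := h2 c
    obtain ⟨e3, he3, g3⟩ := h3 s
    exact ⟨hE, by omega, hTC, ⟨e1, he1, (mR _).2 ⟨hE he1, g1⟩⟩,
      ⟨e2, he2, (mK _).2 ⟨hE he2, g2⟩⟩, ⟨e3, he3, (mS _).2 ⟨hE he3, g3⟩⟩⟩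
  · rintro ⟨hE, hcard, hTC, ⟨e1, he1, g1⟩, ⟨e2, he2, g2⟩, ⟨e3, he3, g3⟩⟩
    refine ⟨⟨hE, fun i => ?_, fun j => ?_, fun k => ?_⟩, by omega, hTC⟩
    · by_cases h : i = r
      · exact ⟨e1, he1, ((mR _).1 g1).2.trans h.symm⟩
      · obtain ⟨e, he, h⟩ := hr' i h
        exact ⟨e, hTC he, h⟩
    · by_cases h : j = c
      · exact ⟨e2, he2, ((mK _).1 g2).2.trans h.symm⟩
      · obtain ⟨e, he, h⟩ := hc' j h
        exact ⟨e, hTC he, h⟩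
    · by_cases h : k = s
      · exact ⟨e3, he3, ((mS _).1 g3).2.trans h.symm⟩
      · obtain ⟨e, he, h⟩ := hs' k h
        exact ⟨e, hTC he, h⟩
end

section
/- Let T be a maximal partial transversal of deficit 2 in a Latin square L of order n ≥ 3. Then T is contained in exactly 8 distinct covers of L of size n + 1. -/
theorem mem_lsEntries {n : ℕ} {L : Fin n → Fin n → Fin n} {e : Fin n × Fin n × Fin n} :
    e ∈ lsEntries L ↔ L e.1 e.2.1 = e.2.2 := by
  obtain ⟨i, j, k⟩ := e
  simp only [lsEntries, Finset.mem_image, Finset.mem_univ, true_and, Prod.exists, Prod.mk.injEq]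
  constructor
  · rintro ⟨a, b, rfl, rfl, h⟩
    exact h
  · intro h
    exact ⟨i, j, rfl, rfl, h⟩

/-- The two values missed by an injective coordinate on a set of size `n - 2`, indexed by
`Bool`. -/
theorem exists_missing_pair {n : ℕ} (T : Finset (Fin n × Fin n × Fin n)) (hT : T.card + 2 = n)
    (f : Fin n × Fin n × Fin n → Fin n) (hf : Set.InjOn f T) :
    ∃ r : Bool → Fin n, Function.Injective r ∧ ∀ i, (∃ x, r x = i) ↔ ∀ e ∈ T, f e ≠ i := by
  have h : ((T.image f)ᶜ).card = 2 := by
    rw [Finset.card_compl, Finset.card_image_of_injOn hf, Fintype.card_fin]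
    omega
  obtain ⟨a, b, hab, hc⟩ := Finset.card_eq_two.1 h
  refine ⟨fun x => cond x a b, ?_, fun i => ?_⟩
  · intro x y hxy
    cases x <;> cases y <;> simp_all
  · have := congrArg (fun S => i ∈ S) hc
    simp only [Finset.mem_compl, Finset.mem_image, Finset.mem_insert, Finset.mem_singleton,
      not_exists, not_and, eq_iff_iff] at this
    rw [Bool.exists_bool]
    simp only [cond_true, cond_false]
    rw [show (∀ e ∈ T, f e ≠ i) ↔ (i = a ∨ i = b) from this]
    tauto

/-- Three pairs of distinct elements of a three-element set, with no element common to all three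
pairs: any two of the pairs meet in exactly one element, and these three elements are the whole
set. -/
theorem three_entries_pattern {α : Type*} [DecidableEq α] {D : Finset α} (hD : D.card = 3)
    (u v w : Bool → α) (hu : Function.Injective u) (hv : Function.Injective v)
    (hw : Function.Injective w) (huD : ∀ x, u x ∈ D) (hvD : ∀ x, v x ∈ D) (hwD : ∀ x, w x ∈ D)
    (hno : ∀ x y z, u x = v y → u x ≠ w z) :
    ∃ x y z, u x = v y ∧ u (!x) = w z ∧ v (!y) = w (!z) ∧ D = {u x, u (!x), v (!y)} := by
  have key : ∀ a b c d : α, a ∈ D → b ∈ D → c ∈ D → d ∈ D → a ≠ b → a ≠ c → a ≠ d → b ≠ c →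
      b ≠ d → c ≠ d → False := by
    intro a b c d ha hb hc hd hab hac had hbc hbd hcd
    have h4 : ({a, b, c, d} : Finset α).card = 4 := by
      simp [Finset.card_insert_of_notMem, *]
    have hsub : ({a, b, c, d} : Finset α) ⊆ D := by
      simp [Finset.insert_subset_iff, *]
    have := Finset.card_le_card hsub
    omega
  have hne : ∀ {f : Bool → α}, Function.Injective f → ∀ x, f x ≠ f (!x) := by
    intro f hf x h
    have := hf h
    cases x <;> simp at this
  obtain ⟨x, y, hxy⟩ : ∃ x y, u x = v y := by
    by_contra! h
    exact key (u true) (u false) (v true) (v false) (huD _) (huD _) (hvD _) (hvD _)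
      (hne hu true) (h _ _) (h _ _) (h _ _) (h _ _) (hne hv true)
  have hxy' : u (!x) ≠ v (!y) := fun h =>
    key (u x) (u (!x)) (w true) (w false) (huD _) (huD _) (hwD _) (hwD _)
      (hne hu x) (hno _ _ _ hxy) (hno _ _ _ hxy) (hno _ _ _ h) (hno _ _ _ h) (hne hw true)
  have hxv : u x ≠ v (!y) := hxy ▸ hne hv y
  have hDeq : D = {u x, u (!x), v (!y)} := by
    symm
    apply Finset.eq_of_subset_of_card_le
    · simp [Finset.insert_subset_iff, huD, hvD]
    · rw [hD, Finset.card_insert_of_notMem, Finset.card_pair hxy']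
      simp [hne hu x, hxv]
  have hwmem : ∀ z, w z = u (!x) ∨ w z = v (!y) := by
    intro z
    have := hwD z
    rw [hDeq] at this
    simp only [Finset.mem_insert, Finset.mem_singleton] at this
    exact this.resolve_left fun h => hno _ _ _ hxy h.symm
  have hww := hne hw true
  rcases hwmem true with h1 | h1 <;> rcases hwmem false with h2 | h2
  · exact absurd (h1.trans h2.symm) hww
  · exact ⟨x, y, true, hxy, h1.symm, h2.symm, hDeq⟩
  · exact ⟨x, y, false, hxy, h2.symm, h1.symm, hDeq⟩
  · exact absurd (h1.trans h2.symm) hww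

/-- An entry in a row, a column and a symbol all missed by `T` would extend `T`. -/
theorem no_triple_of_maximal {n : ℕ} {L : Fin n → Fin n → Fin n}
    {T : Finset (Fin n × Fin n × Fin n)} (hT : IsMaximalPT L T) {e : Fin n × Fin n × Fin n}
    (he : e ∈ lsEntries L) (h1 : ∀ f ∈ T, f.1 ≠ e.1) (h2 : ∀ f ∈ T, f.2.1 ≠ e.2.1)
    (h3 : ∀ f ∈ T, f.2.2 ≠ e.2.2) : False := by
  refine hT.2 e he (fun h => h1 e h rfl) ⟨Finset.insert_subset he hT.1.1, ?_⟩
  intro a ha b hb hab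
  rw [Finset.mem_insert] at ha hb
  rcases ha with rfl | ha <;> rcases hb with rfl | hb
  · exact absurd rfl hab
  · exact ⟨(h1 b hb).symm, (h2 b hb).symm, (h3 b hb).symm⟩
  · exact ⟨h1 a ha, h2 a ha, h3 a ha⟩
  · exact hT.1.2 a ha b hb hab

/-- A maximal partial transversal of deficit `2` in a Latin square of order `n ≥ 3`
belongs to exactly `8` covers of size `n + 1`. -/
theorem stmt9 {n : ℕ} (hn : 3 ≤ n) (L : Fin n → Fin n → Fin n) (hL : IsLatin L)
    (T : Finset (Fin n × Fin n × Fin n)) (hT : IsMaximalPT L T)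
    (hTcard : T.card + 2 = n) :
    {C : Finset (Fin n × Fin n × Fin n) |
        IsLSCover L C ∧ C.card = n + 1 ∧ T ⊆ C}.ncard = 8 := by
  obtain ⟨r, hr, hrT⟩ := exists_missing_pair T hTcard (fun e => e.1) (by
    intro e he f hf h
    by_contra hne
    exact (hT.1.2 e he f hf hne).1 h)
  obtain ⟨c, hc, hcT⟩ := exists_missing_pair T hTcard (fun e => e.2.1) (by
    intro e he f hf h
    by_contra hne
    exact (hT.1.2 e he f hf hne).2.1 h)
  obtain ⟨s, hs, hsT⟩ := exists_missing_pair T hTcard (fun e => e.2.2) (by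
    intro e he f hf h
    by_contra hne
    exact (hT.1.2 e he f hf hne).2.2 h)
  have hmax : ∀ e ∈ lsEntries L, ∀ x y z, r x = e.1 → c y = e.2.1 → s z = e.2.2 → False :=
    fun e he x y z h1 h2 h3 => no_triple_of_maximal hT he ((hrT _).1 ⟨x, h1⟩) ((hcT _).1 ⟨y, h2⟩)
      ((hsT _).1 ⟨z, h3⟩)
  -- Any two coordinates determine an entry.
  have uRC : ∀ e ∈ lsEntries L, ∀ f ∈ lsEntries L, e.1 = f.1 → e.2.1 = f.2.1 → e = f := by
    intro e he f hf h1 h2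
    rw [mem_lsEntries] at he hf
    refine Prod.ext h1 (Prod.ext h2 ?_)
    rw [← he, ← hf, h1, h2]
  have uRS : ∀ e ∈ lsEntries L, ∀ f ∈ lsEntries L, e.1 = f.1 → e.2.2 = f.2.2 → e = f := by
    intro e he f hf h1 h2
    refine uRC e he f hf h1 ((hL.1 f.1).1 ?_)
    rw [mem_lsEntries] at he hf
    simp only
    rw [hf, ← h2, ← he, h1]
  have uCS : ∀ e ∈ lsEntries L, ∀ f ∈ lsEntries L, e.2.1 = f.2.1 → e.2.2 = f.2.2 → e = f := by
    intro e he f hf h1 h2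
    refine uRC e he f hf ((hL.2 f.2.1).1 ?_) h1
    rw [mem_lsEntries] at he hf
    simp only
    rw [hf, ← h2, ← he, h1]
  -- The entries of types row-column, row-symbol and column-symbol.
  have eRC : ∀ x y, ∃ e ∈ lsEntries L, e.1 = r x ∧ e.2.1 = c y := fun x y =>
    ⟨(r x, c y, L (r x) (c y)), mem_lsEntries.2 rfl, rfl, rfl⟩
  have eRS : ∀ x z, ∃ e ∈ lsEntries L, e.1 = r x ∧ e.2.2 = s z := fun x z => by
    obtain ⟨j, hj⟩ := (hL.1 (r x)).2 (s z)
    exact ⟨(r x, j, s z), mem_lsEntries.2 hj, rfl, rfl⟩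
  have eCS : ∀ y z, ∃ e ∈ lsEntries L, e.2.1 = c y ∧ e.2.2 = s z := fun y z => by
    obtain ⟨i, hi⟩ := (hL.2 (c y)).2 (s z)
    exact ⟨(i, c y, s z), mem_lsEntries.2 hi, rfl, rfl⟩
  choose a haE ha1 ha2 using eRC
  choose b hbE hb1 hb3 using eRS
  choose d hdE hd2 hd3 using eCS
  have haT : ∀ x y, a x y ∉ T := fun x y h => (hrT _).1 ⟨x, rfl⟩ _ h (ha1 x y)
  have hbT : ∀ x z, b x z ∉ T := fun x z h => (hrT _).1 ⟨x, rfl⟩ _ h (hb1 x z)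
  have hdT : ∀ y z, d y z ∉ T := fun y z h => (hcT _).1 ⟨y, rfl⟩ _ h (hd2 y z)
  have hab : ∀ x y x' z, a x y ≠ b x' z := fun x y x' z h =>
    hmax _ (haE x y) x y z (ha1 x y).symm (ha2 x y).symm (by rw [h, hb3])
  have had : ∀ x y y' z, a x y ≠ d y' z := fun x y y' z h =>
    hmax _ (haE x y) x y z (ha1 x y).symm (ha2 x y).symm (by rw [h, hd3])
  have hbd : ∀ x z y z', b x z ≠ d y z' := fun x z y z' h =>
    hmax _ (hbE x z) x y z (hb1 x z).symm (by rw [h, hd2]) (hb3 x z).symm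
  let F : Bool × Bool × Bool → Finset (Fin n × Fin n × Fin n) := fun p =>
    T ∪ {a p.1 p.2.1, b (!p.1) p.2.2, d (!p.2.1) (!p.2.2)}
  have hF : Function.Injective F := by
    rintro ⟨x, y, z⟩ ⟨x', y', z'⟩ h
    have h1 : a x y ∈ F (x', y', z') := by rw [← h]; simp [F]
    have h2 : b (!x) z ∈ F (x', y', z') := by rw [← h]; simp [F]
    simp only [F, Finset.mem_union, Finset.mem_insert, Finset.mem_singleton, haT, hab, had,
      false_or, or_false] at h1
    simp only [F, Finset.mem_union, Finset.mem_insert, Finset.mem_singleton, hbT, (hab _ _ _ _).symm,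
      hbd, false_or, or_false] at h2
    have hx : x = x' := hr (by rw [← ha1 x y, h1, ha1])
    have hy : y = y' := hc (by rw [← ha2 x y, h1, ha2])
    have hz : z = z' := hs (by rw [← hb3 (!x) z, h2, hb3])
    rw [hx, hy, hz]
  have hbool : ∀ x y : Bool, x = y ∨ x = !y := by decide
  have hset : {C : Finset (Fin n × Fin n × Fin n) |
        IsLSCover L C ∧ C.card = n + 1 ∧ T ⊆ C} = F '' Set.univ := by
    ext C
    simp only [Set.mem_ofPred_eq, Set.image_univ, Set.mem_range]
    constructor
    · rintro ⟨⟨hCE, hC1, hC2, hC3⟩, hCc, hTC⟩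
      have hDc : (C \ T).card = 3 := by
        rw [Finset.card_sdiff_of_subset hTC]
        omega
      have hu : ∀ x, ∃ e ∈ C \ T, e.1 = r x := fun x => by
        obtain ⟨e, he, h⟩ := hC1 (r x)
        exact ⟨e, Finset.mem_sdiff.2 ⟨he, fun h' => (hrT _).1 ⟨x, rfl⟩ _ h' h⟩, h⟩
      have hv : ∀ y, ∃ e ∈ C \ T, e.2.1 = c y := fun x => by
        obtain ⟨e, he, h⟩ := hC2 (c x)
        exact ⟨e, Finset.mem_sdiff.2 ⟨he, fun h' => (hcT _).1 ⟨x, rfl⟩ _ h' h⟩, h⟩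
      have hw : ∀ z, ∃ e ∈ C \ T, e.2.2 = s z := fun x => by
        obtain ⟨e, he, h⟩ := hC3 (s x)
        exact ⟨e, Finset.mem_sdiff.2 ⟨he, fun h' => (hsT _).1 ⟨x, rfl⟩ _ h' h⟩, h⟩
      choose u huD hu using hu
      choose v hvD hv using hv
      choose w hwD hw using hw
      have hDE : ∀ e ∈ C \ T, e ∈ lsEntries L := fun e he => hCE (Finset.mem_sdiff.1 he).1
      obtain ⟨x, y, z, h1, h2, h3, hD⟩ := three_entries_pattern hDc u v w
        (fun i j h => hr (by rw [← hu, h, hu])) (fun i j h => hc (by rw [← hv, h, hv]))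
        (fun i j h => hs (by rw [← hw, h, hw])) huD hvD hwD
        (fun x y z h h' => hmax (u x) (hDE _ (huD x)) x y z (hu x).symm (by rw [h, hv])
          (by rw [h', hw]))
      refine ⟨(x, y, z), ?_⟩
      have e1 : u x = a x y := uRC _ (hDE _ (huD x)) _ (haE _ _) (by rw [hu, ha1])
        (by rw [h1, hv, ha2])
      have e2 : u (!x) = b (!x) z := uRS _ (hDE _ (huD _)) _ (hbE _ _) (by rw [hu, hb1])
        (by rw [h2, hw, hb3])
      have e3 : v (!y) = d (!y) (!z) := uCS _ (hDE _ (hvD _)) _ (hdE _ _) (by rw [hv, hd2])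
        (by rw [h3, hw, hd3])
      simp only [F]
      rw [← e1, ← e2, ← e3, ← hD, Finset.union_sdiff_of_subset hTC]
    · rintro ⟨⟨x, y, z⟩, rfl⟩
      have ma : a x y ∈ F (x, y, z) := by simp [F]
      have mb : b (!x) z ∈ F (x, y, z) := by simp [F]
      have md : d (!y) (!z) ∈ F (x, y, z) := by simp [F]
      have mT : T ⊆ F (x, y, z) := Finset.subset_union_left
      refine ⟨⟨?_, ?_, ?_, ?_⟩, ?_, mT⟩
      · apply Finset.union_subset hT.1.1
        simp [Finset.insert_subset_iff, haE, hbE, hdE]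
      · intro i
        by_cases h : ∀ e ∈ T, e.1 ≠ i
        · obtain ⟨x', rfl⟩ := (hrT i).2 h
          rcases hbool x' x with rfl | rfl
          · exact ⟨_, ma, ha1 _ _⟩
          · exact ⟨_, mb, hb1 _ _⟩
        · push Not at h
          obtain ⟨e, he, h⟩ := h
          exact ⟨e, mT he, h⟩
      · intro j
        by_cases h : ∀ e ∈ T, e.2.1 ≠ j
        · obtain ⟨y', rfl⟩ := (hcT j).2 h
          rcases hbool y' y with rfl | rfl
          · exact ⟨_, ma, ha2 _ _⟩
          · exact ⟨_, md, hd2 _ _⟩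
        · push Not at h
          obtain ⟨e, he, h⟩ := h
          exact ⟨e, mT he, h⟩
      · intro k
        by_cases h : ∀ e ∈ T, e.2.2 ≠ k
        · obtain ⟨z', rfl⟩ := (hsT k).2 h
          rcases hbool z' z with rfl | rfl
          · exact ⟨_, mb, hb3 _ _⟩
          · exact ⟨_, md, hd3 _ _⟩
        · push Not at h
          obtain ⟨e, he, h⟩ := h
          exact ⟨e, mT he, h⟩
      · simp only [F]
        rw [Finset.card_union_of_disjoint, Finset.card_insert_of_notMem,
          Finset.card_pair (hbd _ _ _ _)]
        · omega
        · simp [hab, had]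
        · simp [Finset.disjoint_insert_right, haT, hbT, hdT]
  rw [hset, Set.ncard_image_of_injective _ hF, Set.ncard_univ, Nat.card_eq_fintype_card]
  rfl
end
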